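/- Let d ≥ 1, D ≥ 1, and let (A_n)_{n≥1} be rotor-router aggregation in ℤ^d built from any configuration of rotor stacks with discrepancy at most D, with T_n the total number of steps taken by the first n particles. Then there is a constant C = C(d), independent of n, D, and the rotor configuration, such that for all n ≥ 1, |T_n − (n · e_o(A_n) − ∑_{x ∈ A_n} e_x(A_n))| ≤ C D n^{1 + 1/d}. -/

import Mathlib

open scoped BigOperators Pointwise symmDiff
open MeasureTheory Filter

noncomputable section
open scoped Classical
namespace RotorRouterPaper

/-- Sites of the lattice `ℤ^d`. -/
abbrev Site (d : ℕ) := Fin d → ℤ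

/-- The `i`-th standard basis vector of `ℤ^d`. -/
def unitVec (d : ℕ) (i : Fin d) : Site d := fun j => if j = i then 1 else 0

/-- Squared Euclidean norm of a lattice point. -/
def nsq {d : ℕ} (x : Site d) : ℝ := ∑ i, ((x i : ℝ)) ^ 2

/-- Euclidean norm of a lattice point. -/
def enorm {d : ℕ} (x : Site d) : ℝ := Real.sqrt (nsq x)

/-- Adjacency `x ∼ y`: Euclidean distance one. -/
def Adj {d : ℕ} (x y : Site d) : Prop := nsq (x - y) = 1

/-- `ω_d`, the Lebesgue volume of the unit ball in `ℝ^d`. -/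
def ballVol (d : ℕ) : ℝ := (volume (Metric.ball (0 : EuclideanSpace ℝ (Fin d)) 1)).toReal

/-- The lattice ball `B_n = {y ∈ ℤ^d : ω_d ‖y‖^d < n}`. -/
def lball (d n : ℕ) : Set (Site d) := {y | ballVol d * enorm y ^ d < (n : ℝ)}

/-- Characterization of the expected exit time function of a (finite) region `A ⊆ ℤ^d`:
it vanishes off `A` and its discrete Laplacian is `-1` on `A`. -/
def IsExitFun (d : ℕ) (A : Set (Site d)) (e : Site d → ℝ) : Prop :=
  (∀ x, x ∉ A → e x = 0) ∧
  ∀ x ∈ A, (1 / (2 * (d : ℝ))) * (∑ i, (e (x + unitVec d i) + e (x - unitVec d i))) - e x = -1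

/-- The expected exit time function `x ↦ e_x(A)` (the unique function satisfying
`IsExitFun` when `A` is finite). -/
def exitFun (d : ℕ) (A : Set (Site d)) : Site d → ℝ :=
  if h : ∃ e, IsExitFun d A e then h.choose else 0

/-- `ē(A) = sup_x e_x(A)`. -/
def ebar (d : ℕ) (A : Set (Site d)) : ℝ := sSup (Set.range (exitFun d A))

/-- `φ(n) = sup {ē(A) - e_o(B_n) : A ⊆ ℤ^d, |A| = n}`. -/
def phi (d n : ℕ) : ℝ :=
  sSup {t | ∃ A : Set (Site d), A.Finite ∧ A.ncard = n ∧ t = ebar d A - exitFun d (lball d n) 0}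

/-- `Φ(n) = ∑_{j=1}^n φ(j)`. -/
def PhiSum (d n : ℕ) : ℝ := ∑ j ∈ Finset.Icc 1 n, phi d j

/-- `ψ(A) = ∑_{x ∈ A} ‖x‖²`. -/
def psi {d : ℕ} (A : Set (Site d)) : ℝ := ∑ᶠ x ∈ A, nsq x

/-- A cardinal direction in `ℤ^d`: one of `±e_1, …, ±e_d`. -/
abbrev Dir (d : ℕ) := Fin d × Bool

/-- The lattice step vector of a cardinal direction. -/
def dirVec (d : ℕ) (ε : Dir d) : Site d := if ε.2 then unitVec d ε.1 else -unitVec d ε.1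

/-- A configuration of rotor stacks `r` (with `r x i` the direction used for the
`(i+1)`-st visit to `x`) has discrepancy at most `D` if for every site, direction and `m ≥ 1`,
among the first `m` rotors of the stack each direction occurs `m/(2d)` times up to error `D`. -/
def HasDiscrepancy (d : ℕ) (D : ℝ) (r : Site d → ℕ → Dir d) : Prop :=
  ∀ (x : Site d) (ε : Dir d) (m : ℕ), 1 ≤ m →
    |(({i | i < m ∧ r x i = ε} : Set ℕ).ncard : ℝ) - (m : ℝ) / (2 * (d : ℝ))| ≤ D

/-- One step of rotor-router walk on a state (current position, visit counts so far):
the particle at `p` being visited for the `(c p + 1)`-st time moves in direction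
`r p (c p)` and the visit count at `p` increases by one. -/
def rstep {d : ℕ} (r : Site d → ℕ → Dir d) (s : Site d × (Site d → ℕ)) :
    Site d × (Site d → ℕ) :=
  (s.1 + dirVec d (r s.1 (s.2 s.1)), Function.update s.2 s.1 (s.2 s.1 + 1))

/-- The state after `t` steps of rotor-router walk started at the origin with visit counts `c`. -/
def walkState {d : ℕ} (r : Site d → ℕ → Dir d) (c : Site d → ℕ) (t : ℕ) :
    Site d × (Site d → ℕ) :=
  (rstep r)^[t] (0, c)

/-- The number of steps until the rotor-router walk started at the origin
(with carried-over visit counts `c`) first leaves the region `A`. -/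
def exitSteps {d : ℕ} (r : Site d → ℕ → Dir d) (A : Set (Site d)) (c : Site d → ℕ) : ℕ :=
  sInf {t | (walkState r c t).1 ∉ A}

/-- The state of rotor-router aggregation after `n` particles have walked and settled:
`(aggState r n).1` is the occupied region `A_{n+1}`, `(aggState r n).2.1` the accumulated
visit counts, and `(aggState r n).2.2` the total number `T_n` of steps taken so far. -/
def aggState {d : ℕ} (r : Site d → ℕ → Dir d) : ℕ → Set (Site d) × (Site d → ℕ) × ℕ
  | 0 => ({0}, fun _ => 0, 0)
  | n + 1 =>
      let s := aggState r n
      let τ := exitSteps r s.1 s.2.1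
      (insert (walkState r s.2.1 τ).1 s.1, (walkState r s.2.1 τ).2, s.2.2 + τ)

/-- The region `A_n` of rotor-router aggregation (for `n ≥ 1`). -/
def aggRegion {d : ℕ} (r : Site d → ℕ → Dir d) (n : ℕ) : Set (Site d) :=
  (aggState r (n - 1)).1

/-- `T_n`, the total number of steps taken by the first `n` particles. -/
def totalSteps {d : ℕ} (r : Site d → ℕ → Dir d) (n : ℕ) : ℕ := (aggState r n).2.2

/-- `A^□ = A + [-1/2,1/2]^d ⊆ ℝ^d`. -/
def box (d : ℕ) (A : Set (Site d)) : Set (EuclideanSpace ℝ (Fin d)) :=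
  {z | ∃ x ∈ A, ∀ i, |z i - (x i : ℝ)| ≤ 1 / 2}

/-- The closed Euclidean ball of unit volume centered at the origin of `ℝ^d`. -/
def unitVolBall (d : ℕ) : Set (EuclideanSpace ℝ (Fin d)) :=
  Metric.closedBall 0 (ballVol d ^ (-(1 : ℝ) / (d : ℝ)))

/-- `A ⊆ ℤ^d` is orthoconvex if every line parallel to a coordinate axis meets `A`
in an interval. -/
def Orthoconvex (d : ℕ) (A : Set (Site d)) : Prop :=
  ∀ x ∈ A, ∀ i : Fin d, ∀ k : ℤ, 0 < k → x + k • unitVec d i ∈ A →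
    ∀ j : ℤ, 0 < j → j < k → x + j • unitVec d i ∈ A

/-- The nonnegative orthant `Q ⊆ ℤ^d`. -/
def orthant (d : ℕ) : Set (Site d) := {x | ∀ i, 0 ≤ x i}

/-- The cube `C(o,r) = {x : ‖x‖_∞ ≤ r}`. -/
def cubeSet (d : ℕ) (r : ℕ) : Set (Site d) := {x | ∀ i, |x i| ≤ (r : ℤ)}

/-- The boundary `∂C(o,r) = {x : ‖x‖_∞ = r + 1 and x ∼ y for some y ∈ C(o,r)}`. -/
def cubeBdry (d : ℕ) (r : ℕ) : Set (Site d) :=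
  {x | (∀ i, |x i| ≤ (r : ℤ) + 1) ∧ (∃ i, |x i| = (r : ℤ) + 1) ∧ ∃ y ∈ cubeSet d r, Adj x y}

/-- Characterization of `h_r(x) = P_x(T_Q > T_{∂C(o,r)})`: it vanishes on
`Q ∩ (C(o,r) ∪ ∂C(o,r))`, equals `1` on `∂C(o,r) ∖ Q`, is discrete harmonic on
`C(o,r) ∖ Q`, and (as a normalization) vanishes off `C(o,r) ∪ ∂C(o,r)`. -/
def IsOrthHarm (d : ℕ) (r : ℕ) (h : Site d → ℝ) : Prop :=
  (∀ x, x ∉ cubeSet d r ∪ cubeBdry d r → h x = 0) ∧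
  (∀ x ∈ orthant d ∩ (cubeSet d r ∪ cubeBdry d r), h x = 0) ∧
  (∀ x ∈ cubeBdry d r \ orthant d, h x = 1) ∧
  (∀ x ∈ cubeSet d r \ orthant d,
    h x = (1 / (2 * (d : ℝ))) * ∑ i, (h (x + unitVec d i) + h (x - unitVec d i)))

/-- The function `h_r` of the previous characterization. -/
def orthHarm (d : ℕ) (r : ℕ) : Site d → ℝ :=
  if h : ∃ f, IsOrthHarm d r f then h.choose else 0

/-- `p(k,r) = sup {h_r(x) : ‖x‖_∞ ≤ k}`. -/
def pkr (d k r : ℕ) : ℝ :=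
  sSup {t | ∃ x : Site d, (∀ i, |x i| ≤ (k : ℤ)) ∧ t = orthHarm d r x}

/-- The exponent `γ_d` of Theorem 3.1. -/
def gam (d : ℕ) : ℝ :=
  if d = 1 then 1 else if d = 2 then 1 / 3
  else (2 : ℝ) ^ (-(d : ℝ)) / (2 * (d : ℝ) ^ 2 * Real.log 3)

/-! Let `e` be the exit time function of `A = A_n`. Just as `e (X_t) + t` is a martingale for
simple random walk `X` until it leaves `A`, the visit counts `c` of rotor-router walk change the
total rotor defect `∑ x ∈ A, rotorDefect r e x (c x)` by exactly `e (X_t) - e 0 + t`. Adding up the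
`n` walks gives `T_n - n e_o + ∑ x ∈ A, e_x` up to a single term `e_o`. By the discrepancy bound
the defect at `x` is at most `D` times the gradient of `e` around `x`, so the error is at most
`(2 D + 1) ‖∇e‖₁`.

To bound `‖∇e‖₁`, Cauchy–Schwarz and summation by parts give
`‖∇e‖₁² ≤ 2 d n ‖∇e‖₂² = 4 d² n ∑ x ∈ A, e_x`. Translating `e` by a cube of side `m ≍ n ^ (1 / d)`
with at least `2 n` points moves at least half of each value off `A`, so that
`∑ x ∈ A, e_x ≤ 2 m ‖∇e‖₁`, and hence `‖∇e‖₁ = O(n m) = O(n ^ (1 + 1 / d))`. -/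

section Variation

theorem summable_of_support_subset {α : Type*} {f : α → ℝ} {A : Finset α}
    (hA : Function.support f ⊆ A) : Summable f :=
  summable_of_hasFiniteSupport (A.finite_toSet.subset hA)

variable {G : Type*} [AddCommGroup G] {f : G → ℝ} {A : Finset G}

/-- The `ℓ¹` norm of the increment of `f` under translation by `v`; meaningful for `f ∈ ℓ¹`. -/
def variation (f : G → ℝ) (v : G) : ℝ := ∑' x, |f (x + v) - f x|

theorem summable_abs_increment (hf : Summable f) (v : G) :
    Summable fun x => |f (x + v) - f x| :=
  ((hf.comp_injective (add_left_injective v)).sub hf).abs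

theorem variation_nonneg (f : G → ℝ) (v : G) : 0 ≤ variation f v :=
  tsum_nonneg fun _ => abs_nonneg _

theorem sum_abs_increment_le_variation (hf : Summable f) (s : Finset G) (v : G) :
    ∑ x ∈ s, |f (x + v) - f x| ≤ variation f v :=
  (summable_abs_increment hf v).sum_le_tsum s fun _ _ => abs_nonneg _

@[simp]
theorem variation_zero (f : G → ℝ) : variation f 0 = 0 := by simp [variation]

@[simp]
theorem variation_neg (f : G → ℝ) (v : G) : variation f (-v) = variation f v := by
  rw [variation, ← (Equiv.addRight v).tsum_eq]
  simp [variation, abs_sub_comm]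

theorem variation_add_le (hf : Summable f) (v w : G) :
    variation f (v + w) ≤ variation f v + variation f w := by
  have hv := summable_abs_increment hf v
  have hw : Summable fun x => |f (x + v + w) - f (x + v)| :=
    (summable_abs_increment hf w).comp_injective (add_left_injective v)
  calc variation f (v + w)
      ≤ ∑' x, (|f (x + v) - f x| + |f (x + v + w) - f (x + v)|) := by
        refine (summable_abs_increment hf _).tsum_le_tsum (fun x => ?_) (hv.add hw)
        rw [← add_assoc, add_comm |f (x + v) - f x|]
        exact abs_sub_le _ _ _
    _ = variation f v + ∑' x, |f (x + v + w) - f (x + v)| := hv.tsum_add hw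
    _ = variation f v + variation f w :=
        congrArg _ ((Equiv.addRight v).tsum_eq fun x => |f (x + w) - f x|)

theorem variation_sum_le (hf : Summable f) {ι : Type*} (s : Finset ι) (v : ι → G) :
    variation f (∑ i ∈ s, v i) ≤ ∑ i ∈ s, variation f (v i) :=
  Finset.le_sum_of_subadditive _ (variation_zero f).le (variation_add_le hf) s v

theorem variation_zsmul_le (hf : Summable f) (k : ℤ) (v : G) :
    variation f (k • v) ≤ |(k : ℝ)| * variation f v := by
  have nsmul_le (n : ℕ) : variation f (n • v) ≤ n * variation f v := by
    simpa using variation_sum_le hf (Finset.range n) fun _ => v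
  obtain ⟨n, rfl | rfl⟩ := k.eq_nat_or_neg <;> simpa using nsmul_le n

theorem abs_le_variation (hf : Summable f) {v : G} (hv : ¬IsOfFinAddOrder v) (x : G) :
    |f x| ≤ variation f v := by
  have hinj : Function.Injective fun k : ℕ => x + k • v :=
    (add_right_injective x).comp (injective_nsmul_iff_not_isOfFinAddOrder.mpr hv)
  have hlim : Tendsto (fun k : ℕ => |f (x + k • v) - f x|) atTop (nhds |f x|) := by
    have := hf.tendsto_cofinite_zero.comp hinj.tendsto_cofinite
    rw [Nat.cofinite_eq_atTop] at this
    simpa using (this.sub_const (f x)).abs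
  refine le_of_tendsto' hlim fun k => ?_
  calc |f (x + k • v) - f x|
      = |∑ j ∈ Finset.range k, (f (x + (j + 1) • v) - f (x + j • v))| := by
        rw [Finset.sum_range_sub fun j => f (x + j • v), zero_smul, add_zero]
    _ ≤ ∑ j ∈ Finset.range k, |f (x + j • v + v) - f (x + j • v)| := by
        simpa only [succ_nsmul, add_assoc] using Finset.abs_sum_le_sum_abs _ _
    _ = ∑ y ∈ (Finset.range k).image fun j => x + j • v, |f (y + v) - f y| :=
        (Finset.sum_image (f := fun y => |f (y + v) - f y|) hinj.injOn).symm
    _ ≤ variation f v := sum_abs_increment_le_variation hf _ v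

-- At least half of the translates of each `x ∈ A` by `B` leave `A`, where `f` vanishes.
theorem card_mul_sum_abs_le_sum_variation (hA : Function.support f ⊆ A) {B : Finset G}
    (hB : 2 * A.card ≤ B.card) :
    B.card * ∑ x ∈ A, |f x| ≤ 2 * ∑ b ∈ B, variation f b := by
  have card_outside (x : G) : (B.card : ℝ) ≤ 2 * (B.filter fun b => x + b ∉ A).card := by
    have hinside : (B.filter fun b => x + b ∈ A).card ≤ A.card :=
      Finset.card_le_card_of_injOn (x + ·) (fun b hb => (Finset.mem_filter.mp hb).2)
        (add_right_injective x).injOn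
    have := B.card_filter_add_card_filter_not fun b => x + b ∈ A
    exact_mod_cast (by lia : B.card ≤ 2 * (B.filter fun b => x + b ∉ A).card)
  have sum_outside (x : G) :
      (B.filter fun b => x + b ∉ A).card * |f x| ≤ ∑ b ∈ B, |f (x + b) - f x| := by
    calc (B.filter fun b => x + b ∉ A).card * |f x|
        = ∑ b ∈ B with x + b ∉ A, |f (x + b) - f x| := by
          rw [← nsmul_eq_mul, ← Finset.sum_const]
          refine Finset.sum_congr rfl fun b hb => ?_
          rw [Function.support_subset_iff'.mp hA _ (Finset.mem_filter.mp hb).2, zero_sub, abs_neg]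
      _ ≤ ∑ b ∈ B, |f (x + b) - f x| :=
          Finset.sum_le_sum_of_subset_of_nonneg (Finset.filter_subset _ _)
            fun _ _ _ => abs_nonneg _
  calc B.card * ∑ x ∈ A, |f x|
      ≤ ∑ x ∈ A, 2 * ∑ b ∈ B, |f (x + b) - f x| := by
        rw [Finset.mul_sum]
        refine Finset.sum_le_sum fun x _ => ?_
        linarith [mul_le_mul_of_nonneg_right (card_outside x) (abs_nonneg (f x)), sum_outside x]
    _ = 2 * ∑ b ∈ B, ∑ x ∈ A, |f (x + b) - f x| := by rw [← Finset.mul_sum, Finset.sum_comm]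
    _ ≤ 2 * ∑ b ∈ B, variation f b := by
        gcongr with b
        exact sum_abs_increment_le_variation (summable_of_support_subset hA) A b

theorem variation_sq_le (hA : Function.support f ⊆ A) (v : G) :
    variation f v ^ 2 ≤ 2 * A.card * ∑' x, (f (x + v) - f x) ^ 2 := by
  set B := A ∪ A.image (· - v)
  have increment_eq_zero (x : G) (hx : x ∉ B) : f (x + v) - f x = 0 := by
    have hsupp := Function.support_subset_iff'.mp hA
    simp only [B, Finset.mem_union, Finset.mem_image, not_or, not_exists, not_and] at hx
    rw [hsupp x hx.1, hsupp (x + v) fun h => hx.2 _ h (add_sub_cancel_right x v), sub_zero]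
  have card_le : (B.card : ℝ) ≤ 2 * A.card := by
    have : B.card ≤ A.card + A.card :=
      (Finset.card_union_le _ _).trans (Nat.add_le_add_left Finset.card_image_le _)
    exact_mod_cast this.trans_eq (two_mul _).symm
  rw [variation, tsum_eq_sum fun x hx => by rw [increment_eq_zero x hx, abs_zero],
    tsum_eq_sum fun x hx => by rw [increment_eq_zero x hx, sq, zero_mul]]
  calc (∑ x ∈ B, |f (x + v) - f x|) ^ 2
      ≤ B.card * ∑ x ∈ B, |f (x + v) - f x| ^ 2 := sq_sum_le_card_mul_sum_sq
    _ ≤ 2 * A.card * ∑ x ∈ B, (f (x + v) - f x) ^ 2 := by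
        simp only [sq_abs]
        gcongr

theorem tsum_sq_increment (hf : f.HasFiniteSupport) (v : G) :
    ∑' x, (f (x + v) - f x) ^ 2 = -∑' x, f x * (f (x + v) + f (x - v) - 2 * f x) := by
  have summable_mul (g : G → ℝ) : Summable fun x => f x * g x :=
    summable_of_hasFiniteSupport (hf.subset (Function.support_mul_subset_left f g))
  have hbackward := summable_mul fun x => f x - f (x - v)
  have hforward := summable_mul fun x => f (x + v) - f x
  have hshift : Summable fun x => f (x + v) * (f (x + v) - f (x + v - v)) :=
    hbackward.comp_injective (add_left_injective v)
  calc ∑' x, (f (x + v) - f x) ^ 2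
      = ∑' x, (f (x + v) * (f (x + v) - f (x + v - v)) - f x * (f (x + v) - f x)) :=
        tsum_congr fun x => by rw [add_sub_cancel_right]; ring
    _ = ∑' x, f (x + v) * (f (x + v) - f (x + v - v)) - ∑' x, f x * (f (x + v) - f x) :=
        hshift.tsum_sub hforward
    _ = ∑' x, f x * (f x - f (x - v)) - ∑' x, f x * (f (x + v) - f x) :=
        congrArg (· - _) ((Equiv.addRight v).tsum_eq fun x => f x * (f x - f (x - v)))
    _ = ∑' x, (f x * (f x - f (x - v)) - f x * (f (x + v) - f x)) :=
        (hbackward.tsum_sub hforward).symm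
    _ = -∑' x, f x * (f (x + v) + f (x - v) - 2 * f x) := by
        rw [← tsum_neg]
        exact tsum_congr fun x => by ring

end Variation

section Laplacian

variable {G ι : Type*} [AddCommGroup G] [Fintype ι] (u : ι → G) {f : G → ℝ} {A : Finset G}

/-- The unnormalized graph Laplacian of the Cayley graph of `G` with steps `±u i`. -/
def laplacian : (G → ℝ) →ₗ[ℝ] (G → ℝ) where
  toFun f x := ∑ i, (f (x + u i) + f (x - u i) - 2 * f x)
  map_add' f g := by
    ext x
    simp only [Pi.add_apply, ← Finset.sum_add_distrib]
    exact Finset.sum_congr rfl fun i _ => by ring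
  map_smul' c f := by
    ext x
    simp only [Pi.smul_apply, RingHom.id_apply, smul_eq_mul, Finset.mul_sum]
    exact Finset.sum_congr rfl fun i _ => by ring

theorem laplacian_apply (f : G → ℝ) (x : G) :
    laplacian u f x = ∑ i, (f (x + u i) + f (x - u i) - 2 * f x) := rfl

/-- The `ℓ¹` norm of the gradient of `f` along the steps `u i`. -/
def gradNorm (f : G → ℝ) : ℝ := ∑ i, variation f (u i)

/-- The Dirichlet energy of `f`, each edge of the Cayley graph with steps `±u i` counted once. -/
def dirichletEnergy (f : G → ℝ) : ℝ := ∑ i, ∑' x, (f (x + u i) - f x) ^ 2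

theorem gradNorm_nonneg (f : G → ℝ) : 0 ≤ gradNorm u f :=
  Finset.sum_nonneg fun _ _ => variation_nonneg _ _

variable {u} in
theorem abs_le_gradNorm (hf : Summable f) {i : ι} (hi : ¬IsOfFinAddOrder (u i)) (x : G) :
    |f x| ≤ gradNorm u f :=
  (abs_le_variation hf hi x).trans <|
    Finset.single_le_sum (f := fun i => variation f (u i)) (fun _ _ => variation_nonneg _ _)
      (Finset.mem_univ i)

theorem dirichletEnergy_eq (hA : Function.support f ⊆ A) :
    dirichletEnergy u f = -∑ x ∈ A, f x * laplacian u f x := by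
  simp only [dirichletEnergy, laplacian_apply, Finset.mul_sum]
  rw [Finset.sum_comm, ← Finset.sum_neg_distrib]
  refine Finset.sum_congr rfl fun i _ => ?_
  rw [tsum_sq_increment (A.finite_toSet.subset hA),
    tsum_eq_sum' ((Function.support_mul_subset_left f _).trans hA)]

theorem gradNorm_sq_le (hA : Function.support f ⊆ A) :
    gradNorm u f ^ 2 ≤ 2 * Fintype.card ι * A.card * dirichletEnergy u f := by
  calc gradNorm u f ^ 2
      ≤ Fintype.card ι * ∑ i, variation f (u i) ^ 2 := sq_sum_le_card_mul_sum_sq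
    _ ≤ Fintype.card ι * ∑ i, 2 * A.card * ∑' x, (f (x + u i) - f x) ^ 2 := by
        gcongr with i
        exact variation_sq_le hA (u i)
    _ = 2 * Fintype.card ι * A.card * dirichletEnergy u f := by
        rw [dirichletEnergy, ← Finset.mul_sum]
        ring

variable {u} in
theorem eq_zero_of_laplacian_eq_zero {i : ι} (hi : ¬IsOfFinAddOrder (u i))
    (hA : Function.support f ⊆ A) (hlap : ∀ x ∈ A, laplacian u f x = 0) : f = 0 := by
  have henergy : dirichletEnergy u f = 0 := by
    rw [dirichletEnergy_eq u hA, Finset.sum_eq_zero fun x hx => by rw [hlap x hx, mul_zero],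
      neg_zero]
  have hgrad : gradNorm u f = 0 :=
    pow_eq_zero_iff two_ne_zero |>.mp <|
      le_antisymm (by simpa [henergy] using gradNorm_sq_le u hA) (sq_nonneg _)
  ext x
  exact abs_nonpos_iff.mp <| hgrad ▸ abs_le_gradNorm (summable_of_support_subset hA) hi x

variable {u} in
theorem exists_laplacian_eq {i : ι} (hi : ¬IsOfFinAddOrder (u i)) (A : Finset G) (g : G → ℝ) :
    ∃ f : G → ℝ, Function.support f ⊆ A ∧ ∀ x ∈ A, laplacian u f x = g x := by
  let extend := Function.ExtendByZero.linearMap ℝ (Subtype.val : A → G)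
  let dirichletLaplacian := LinearMap.funLeft ℝ ℝ (Subtype.val : A → G) ∘ₗ laplacian u ∘ₗ extend
  have hextend (h : A → ℝ) : Function.support (extend h) ⊆ A :=
    Function.support_subset_iff'.mpr fun x hx => Function.extend_apply' _ _ _ (by simpa using hx)
  have hinj : Function.Injective dirichletLaplacian := by
    refine (injective_iff_map_eq_zero _).mpr fun h hh => funext fun x => ?_
    have hzero : extend h = 0 :=
      eq_zero_of_laplacian_eq_zero hi (hextend h) fun x hx => congrFun hh ⟨x, hx⟩
    exact (Subtype.val_injective.extend_apply h 0 x).symm.trans (congrFun hzero x)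
  obtain ⟨h, hh⟩ := LinearMap.injective_iff_surjective.mp hinj (g ∘ Subtype.val)
  exact ⟨extend h, hextend h, fun x hx => congrFun hh ⟨x, hx⟩⟩

end Laplacian

section ExitTime

variable {d : ℕ} {f : Site d → ℝ} {A : Finset (Site d)}

theorem not_isOfFinAddOrder_unitVec (i : Fin d) : ¬IsOfFinAddOrder (unitVec d i) :=
  not_isOfFinAddOrder_of_isAddTorsionFree fun h => by simpa [unitVec] using congrFun h i

theorem variation_le_sum_abs_mul (hf : Summable f) (x : Site d) :
    variation f x ≤ ∑ i, |(x i : ℝ)| * variation f (unitVec d i) := by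
  have hx : x = ∑ i, x i • unitVec d i := by
    ext j
    simp [unitVec]
  calc variation f x
      = variation f (∑ i, x i • unitVec d i) := congrArg _ hx
    _ ≤ ∑ i, variation f (x i • unitVec d i) := variation_sum_le hf _ _
    _ ≤ ∑ i, |(x i : ℝ)| * variation f (unitVec d i) :=
        Finset.sum_le_sum fun i _ => variation_zsmul_le hf _ _

theorem sum_abs_le_mul_gradNorm (hA : Function.support f ⊆ A) {m : ℕ}
    (hm : 2 * A.card ≤ m ^ d) : ∑ x ∈ A, |f x| ≤ 2 * m * gradNorm (unitVec d) f := by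
  obtain rfl | hAne := A.eq_empty_or_nonempty
  · simpa using mul_nonneg (by positivity) (gradNorm_nonneg _ f)
  set B : Finset (Site d) := Fintype.piFinset fun _ => Finset.Ico (0 : ℤ) m
  have hB : B.card = m ^ d := by rw [Fintype.card_piFinset_const, Int.card_Ico]; simp
  have hBpos : (0 : ℝ) < B.card := by
    have := hAne.card_pos
    exact_mod_cast (by lia : 0 < B.card)
  have variation_le (b : Site d) (hb : b ∈ B) :
      variation f b ≤ m * gradNorm (unitVec d) f := by
    refine (variation_le_sum_abs_mul (summable_of_support_subset hA) b).trans ?_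
    rw [gradNorm, Finset.mul_sum]
    refine Finset.sum_le_sum fun i _ => mul_le_mul_of_nonneg_right ?_ (variation_nonneg _ _)
    obtain ⟨h0, hlt⟩ := Finset.mem_Ico.mp (Fintype.mem_piFinset.mp hb i)
    exact_mod_cast (abs_of_nonneg h0).trans_le hlt.le
  refine le_of_mul_le_mul_left ?_ hBpos
  calc B.card * ∑ x ∈ A, |f x|
      ≤ 2 * ∑ b ∈ B, variation f b := card_mul_sum_abs_le_sum_variation hA (hm.trans_eq hB.symm)
    _ ≤ 2 * (B.card • (m * gradNorm (unitVec d) f)) := by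
        gcongr
        exact Finset.sum_le_card_nsmul _ _ _ variation_le
    _ = B.card * (2 * m * gradNorm (unitVec d) f) := by rw [nsmul_eq_mul]; ring

theorem gradNorm_le_of_abs_laplacian_le (hA : Function.support f ⊆ A) {K : ℝ} (hK : 0 ≤ K)
    (hlap : ∀ x ∈ A, |laplacian (unitVec d) f x| ≤ K) {m : ℕ} (hm : 2 * A.card ≤ m ^ d) :
    gradNorm (unitVec d) f ≤ 4 * d * A.card * m * K := by
  set g := gradNorm (unitVec d) f
  have henergy : dirichletEnergy (unitVec d) f ≤ K * (2 * m * g) := by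
    calc dirichletEnergy (unitVec d) f
        ≤ ∑ x ∈ A, |f x * laplacian (unitVec d) f x| := by
          rw [dirichletEnergy_eq _ hA]
          exact (neg_le_abs _).trans (Finset.abs_sum_le_sum_abs _ _)
      _ ≤ ∑ x ∈ A, K * |f x| := Finset.sum_le_sum fun x hx => by
          rw [abs_mul, mul_comm]
          exact mul_le_mul_of_nonneg_right (hlap x hx) (abs_nonneg _)
      _ ≤ K * (2 * m * g) := by
          rw [← Finset.mul_sum]
          exact mul_le_mul_of_nonneg_left (sum_abs_le_mul_gradNorm hA hm) hK
  have hsq : g * g ≤ 4 * d * A.card * m * K * g := by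
    calc g * g ≤ 2 * d * A.card * dirichletEnergy (unitVec d) f := by
          simpa [sq] using gradNorm_sq_le (unitVec d) hA
      _ ≤ 2 * d * A.card * (K * (2 * m * g)) := by gcongr
      _ = 4 * d * A.card * m * K * g := by ring
  obtain hg | hg := (gradNorm_nonneg (unitVec d) f).eq_or_lt
  · exact hg.symm.trans_le (by positivity)
  · exact le_of_mul_le_mul_right hsq hg

variable [NeZero d]

theorem isExitFun_iff {S : Set (Site d)} {e : Site d → ℝ} :
    IsExitFun d S e ↔
      Function.support e ⊆ S ∧ ∀ x ∈ S, laplacian (unitVec d) e x = -(2 * d) := by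
  have hd : (d : ℝ) ≠ 0 := NeZero.ne _
  rw [IsExitFun, Function.support_subset_iff']
  refine and_congr_right fun _ => forall₂_congr fun x _ => ?_
  rw [laplacian_apply, Finset.sum_sub_distrib]
  simp only [Finset.sum_const, Finset.card_univ, Fintype.card_fin, nsmul_eq_mul]
  constructor <;> intro h <;> field_simp at h ⊢ <;> linarith

theorem isExitFun_exitFun (A : Finset (Site d)) : IsExitFun d A (exitFun d A) := by
  have hex : ∃ e, IsExitFun d A e :=
    (exists_laplacian_eq (not_isOfFinAddOrder_unitVec (0 : Fin d)) A fun _ => -(2 * d)).imp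
      fun _ => isExitFun_iff.mpr
  rw [exitFun, dif_pos hex]
  exact hex.choose_spec

theorem support_exitFun_subset (A : Finset (Site d)) :
    Function.support (exitFun d A) ⊆ A :=
  (isExitFun_iff.mp (isExitFun_exitFun A)).1

theorem laplacian_exitFun {x : Site d} (hx : x ∈ A) :
    laplacian (unitVec d) (exitFun d A) x = -(2 * d) :=
  (isExitFun_iff.mp (isExitFun_exitFun A)).2 x hx

theorem abs_exitFun_le_gradNorm (A : Finset (Site d)) (x : Site d) :
    |exitFun d A x| ≤ gradNorm (unitVec d) (exitFun d A) :=
  abs_le_gradNorm (summable_of_support_subset (support_exitFun_subset A))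
    (not_isOfFinAddOrder_unitVec 0) x

variable (d) in
theorem exists_nat_two_mul_le_pow (n : ℕ) :
    ∃ m : ℕ, 2 * n ≤ m ^ d ∧ (m : ℝ) ≤ 3 * (n : ℝ) ^ (1 / (d : ℝ)) := by
  obtain rfl | hn := Nat.eq_zero_or_pos n
  · exact ⟨0, by simp, by rw [Nat.cast_zero]; positivity⟩
  set y : ℝ := (n : ℝ) ^ (1 / (d : ℝ)) with hy
  have hy1 : 1 ≤ y := Real.one_le_rpow (by exact_mod_cast hn) (by positivity)
  have hyd : y ^ d = n := by
    rw [hy, one_div, Real.rpow_inv_natCast_pow n.cast_nonneg (NeZero.ne d)]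
  refine ⟨⌈2 * y⌉₊, ?_, by linarith [Nat.ceil_lt_add_one (by positivity : 0 ≤ 2 * y)]⟩
  have : (2 * n : ℝ) ≤ (⌈2 * y⌉₊ : ℝ) ^ d := by
    calc (2 * n : ℝ) ≤ 2 ^ d * y ^ d := by
          rw [hyd]
          gcongr
          exact le_self_pow₀ one_le_two (NeZero.ne d)
      _ = (2 * y) ^ d := (mul_pow _ _ _).symm
      _ ≤ (⌈2 * y⌉₊ : ℝ) ^ d := by gcongr; exact Nat.le_ceil _
  exact_mod_cast this

theorem gradNorm_exitFun_le (A : Finset (Site d)) :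
    gradNorm (unitVec d) (exitFun d A) ≤ 24 * d ^ 2 * (A.card : ℝ) ^ (1 + 1 / (d : ℝ)) := by
  obtain ⟨m, hm, hm_le⟩ := exists_nat_two_mul_le_pow d A.card
  have hlap (x : Site d) (hx : x ∈ A) : |laplacian (unitVec d) (exitFun d A) x| ≤ 2 * d := by
    rw [laplacian_exitFun hx, abs_neg, abs_of_nonneg (by positivity)]
  calc gradNorm (unitVec d) (exitFun d A)
      ≤ 4 * d * A.card * m * (2 * d) :=
        gradNorm_le_of_abs_laplacian_le (support_exitFun_subset A) (by positivity) hlap hm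
    _ ≤ 4 * d * A.card * (3 * (A.card : ℝ) ^ (1 / (d : ℝ))) * (2 * d) := by gcongr
    _ = 24 * d ^ 2 * (A.card : ℝ) ^ (1 + 1 / (d : ℝ)) := by
        rw [Real.rpow_one_add' A.card.cast_nonneg (ne_of_gt (by positivity))]
        ring

end ExitTime

section RotorRouter

variable {d : ℕ} {D : ℝ} {r : Site d → ℕ → Dir d} {A : Finset (Site d)} {f : Site d → ℝ}

theorem sum_dirVec (g : Site d → ℝ) :
    ∑ ε : Dir d, g (dirVec d ε) = ∑ i, (g (unitVec d i) + g (-unitVec d i)) := by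
  simp [Fintype.sum_prod_type, dirVec]

theorem laplacian_unitVec (f : Site d → ℝ) (x : Site d) :
    laplacian (unitVec d) f x = ∑ ε : Dir d, (f (x + dirVec d ε) - f x) := by
  rw [sum_dirVec fun v => f (x + v) - f x, laplacian_apply]
  exact Finset.sum_congr rfl fun i _ => by rw [sub_eq_add_neg x]; ring

theorem sum_abs_increment_dirVec_le (hf : Summable f) (s : Finset (Site d)) :
    ∑ x ∈ s, ∑ ε : Dir d, |f (x + dirVec d ε) - f x| ≤ 2 * gradNorm (unitVec d) f := by
  calc ∑ x ∈ s, ∑ ε : Dir d, |f (x + dirVec d ε) - f x|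
      ≤ ∑ ε : Dir d, variation f (dirVec d ε) := by
        rw [Finset.sum_comm]
        exact Finset.sum_le_sum fun ε _ => sum_abs_increment_le_variation hf s _
    _ = 2 * gradNorm (unitVec d) f := by
        simp only [sum_dirVec, variation_neg, ← two_mul, gradNorm, Finset.mul_sum]

theorem HasDiscrepancy.nonneg (hr : HasDiscrepancy d D r) : 0 ≤ D :=
  (abs_nonneg _).trans (hr 0 (r 0 0) 1 le_rfl)

theorem HasDiscrepancy.abs_card_filter_sub_le (hr : HasDiscrepancy d D r) (x : Site d)
    (ε : Dir d) (m : ℕ) :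
    |(((Finset.range m).filter (r x · = ε)).card : ℝ) - m / (2 * d)| ≤ D := by
  obtain rfl | hm := Nat.eq_zero_or_pos m
  · simpa using hr.nonneg
  · simpa [← Set.ncard_coe_finset] using hr x ε m hm

/-- The total change of `f` along the first `m` rotors at `x`, compensated by its mean over a
uniformly random step: the analogue for rotor walk of the martingale
`f (X_t) - f (X_0) - ∑ s < t, (Δ f) (X_s) / (2d)` of simple random walk. -/
def rotorDefect (r : Site d → ℕ → Dir d) (f : Site d → ℝ) (x : Site d) (m : ℕ) : ℝ :=
  ∑ i ∈ Finset.range m, (f (x + dirVec d (r x i)) - f x)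
    - m * (laplacian (unitVec d) f x / (2 * d))

theorem rotorDefect_zero (r : Site d → ℕ → Dir d) (f : Site d → ℝ) (x : Site d) :
    rotorDefect r f x 0 = 0 := by simp [rotorDefect]

theorem rotorDefect_succ (r : Site d → ℕ → Dir d) (f : Site d → ℝ) (x : Site d) (m : ℕ) :
    rotorDefect r f x (m + 1) = rotorDefect r f x m
      + (f (x + dirVec d (r x m)) - f x - laplacian (unitVec d) f x / (2 * d)) := by
  simp only [rotorDefect, Finset.sum_range_succ]
  push_cast
  ring

theorem rotorDefect_eq_sum (r : Site d → ℕ → Dir d) (f : Site d → ℝ) (x : Site d) (m : ℕ) :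
    rotorDefect r f x m = ∑ ε : Dir d,
      (((Finset.range m).filter (r x · = ε)).card - m / (2 * d) : ℝ)
        * (f (x + dirVec d ε) - f x) := by
  have by_direction : ∑ i ∈ Finset.range m, (f (x + dirVec d (r x i)) - f x)
      = ∑ ε : Dir d, ((Finset.range m).filter (r x · = ε)).card * (f (x + dirVec d ε) - f x) := by
    rw [← Finset.sum_fiberwise _ (r x)]
    refine Finset.sum_congr rfl fun ε _ => ?_
    rw [← nsmul_eq_mul, ← Finset.sum_const]
    exact Finset.sum_congr rfl fun i hi => by rw [(Finset.mem_filter.mp hi).2]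
  rw [rotorDefect, by_direction, laplacian_unitVec, mul_div_left_comm, mul_comm, Finset.mul_sum,
    ← Finset.sum_sub_distrib]
  exact Finset.sum_congr rfl fun ε _ => by ring

theorem abs_rotorDefect_le (hr : HasDiscrepancy d D r) (f : Site d → ℝ) (x : Site d) (m : ℕ) :
    |rotorDefect r f x m| ≤ D * ∑ ε : Dir d, |f (x + dirVec d ε) - f x| := by
  rw [rotorDefect_eq_sum, Finset.mul_sum]
  refine (Finset.abs_sum_le_sum_abs _ _).trans (Finset.sum_le_sum fun ε _ => ?_)
  rw [abs_mul]
  exact mul_le_mul_of_nonneg_right (hr.abs_card_filter_sub_le x ε m) (abs_nonneg _)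

theorem abs_sum_rotorDefect_le (hr : HasDiscrepancy d D r) (hf : Summable f)
    (s : Finset (Site d)) (c : Site d → ℕ) :
    |∑ x ∈ s, rotorDefect r f x (c x)| ≤ 2 * D * gradNorm (unitVec d) f := by
  calc |∑ x ∈ s, rotorDefect r f x (c x)|
      ≤ ∑ x ∈ s, D * ∑ ε : Dir d, |f (x + dirVec d ε) - f x| :=
        (Finset.abs_sum_le_sum_abs _ _).trans
          (Finset.sum_le_sum fun x _ => abs_rotorDefect_le hr f x (c x))
    _ ≤ D * (2 * gradNorm (unitVec d) f) := by
        rw [← Finset.mul_sum]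
        exact mul_le_mul_of_nonneg_left (sum_abs_increment_dirVec_le hf s) hr.nonneg
    _ = 2 * D * gradNorm (unitVec d) f := by ring

theorem walkState_zero (r : Site d → ℕ → Dir d) (c : Site d → ℕ) :
    walkState r c 0 = (0, c) := rfl

theorem walkState_succ (r : Site d → ℕ → Dir d) (c : Site d → ℕ) (t : ℕ) :
    walkState r c (t + 1) = rstep r (walkState r c t) :=
  Function.iterate_succ_apply' _ _ _

theorem sum_rotorDefect_rstep (hlap : ∀ x ∈ A, laplacian (unitVec d) f x = -(2 * d))
    {s : Site d × (Site d → ℕ)} (hs : s.1 ∈ A) :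
    ∑ x ∈ A, rotorDefect r f x ((rstep r s).2 x)
      = ∑ x ∈ A, rotorDefect r f x (s.2 x) + (f (rstep r s).1 - f s.1 + 1) := by
  have hd : (d : ℝ) ≠ 0 := Nat.cast_ne_zero.mpr (r 0 0).1.pos.ne'
  rw [← sub_eq_iff_eq_add', ← Finset.sum_sub_distrib, Finset.sum_eq_single_of_mem s.1 hs]
  · simp only [rstep, Function.update_self]
    rw [rotorDefect_succ, hlap _ hs]
    field_simp
    ring
  · intro x _ hx
    simp only [rstep, Function.update_of_ne hx, sub_self]

theorem sum_rotorDefect_walkState (hlap : ∀ x ∈ A, laplacian (unitVec d) f x = -(2 * d))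
    (c : Site d → ℕ) {t : ℕ} (hA : ∀ s < t, (walkState r c s).1 ∈ A) :
    ∑ x ∈ A, rotorDefect r f x ((walkState r c t).2 x)
      = ∑ x ∈ A, rotorDefect r f x (c x) + (f (walkState r c t).1 - f 0 + t) := by
  induction t with
  | zero => simp [walkState_zero]
  | succ t ih =>
    rw [walkState_succ, sum_rotorDefect_rstep hlap (hA t t.lt_succ_self),
      ih fun s hs => hA s (hs.trans t.lt_succ_self)]
    push_cast
    ring

theorem walkState_mem_of_lt_exitSteps {S : Set (Site d)} {c : Site d → ℕ} {t : ℕ}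
    (ht : t < exitSteps r S c) : (walkState r c t).1 ∈ S :=
  not_not.mp (Nat.notMem_of_lt_sInf ht)

theorem finite_aggState (r : Site d → ℕ → Dir d) (k : ℕ) : (aggState r k).1.Finite := by
  induction k with
  | zero => exact Set.finite_singleton 0
  | succ k ih => exact ih.insert _

theorem monotone_aggState (r : Site d → ℕ → Dir d) : Monotone fun k => (aggState r k).1 :=
  monotone_nat_of_le_succ fun _ => Set.subset_insert _ _

variable [NeZero d]

theorem exists_walkState_notMem (hr : HasDiscrepancy d D r) {S : Set (Site d)} (hS : S.Finite)
    (c : Site d → ℕ) : ∃ t, (walkState r c t).1 ∉ S := by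
  lift S to Finset (Site d) using hS with A
  by_contra! hstay
  set e := exitFun d A
  set g := gradNorm (unitVec d) e
  obtain ⟨t, ht⟩ := exists_nat_gt (4 * D * g + 2 * g)
  have hwalk := sum_rotorDefect_walkState (A := A) (fun x hx => laplacian_exitFun hx) c
    (t := t) fun s _ => hstay s
  have he : Summable e := summable_of_support_subset (support_exitFun_subset A)
  have hstart := abs_le.mp (abs_sum_rotorDefect_le hr he A c)
  have hend := abs_le.mp (abs_sum_rotorDefect_le hr he A (walkState r c t).2)
  have h0 := abs_le.mp (abs_exitFun_le_gradNorm A 0)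
  have hpos := abs_le.mp (abs_exitFun_le_gradNorm A (walkState r c t).1)
  linarith [hstart.1, hend.2, h0.2, hpos.1]

theorem walkState_exitSteps_notMem (hr : HasDiscrepancy d D r) {S : Set (Site d)}
    (hS : S.Finite) (c : Site d → ℕ) : (walkState r c (exitSteps r S c)).1 ∉ S :=
  Nat.sInf_mem (exists_walkState_notMem hr hS c)

theorem ncard_aggState (hr : HasDiscrepancy d D r) (k : ℕ) : (aggState r k).1.ncard = k + 1 := by
  induction k with
  | zero => exact Set.ncard_singleton 0
  | succ k ih =>
    have hfin := finite_aggState r k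
    rw [aggState, Set.ncard_insert_of_notMem (walkState_exitSteps_notMem hr hfin _) hfin, ih]

theorem sum_rotorDefect_aggState (hr : HasDiscrepancy d D r)
    (hlap : ∀ x ∈ A, laplacian (unitVec d) f x = -(2 * d)) {k : ℕ}
    (hA : ∀ j < k, (aggState r j).1 ⊆ A) :
    ∑ x ∈ A, rotorDefect r f x ((aggState r k).2.1 x)
      = ∑ᶠ x ∈ (aggState r k).1, f x - (k + 1) * f 0 + totalSteps r k := by
  induction k with
  | zero => simp [aggState, totalSteps, rotorDefect_zero]
  | succ k ih =>
    have hfin := finite_aggState r k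
    have hwalk := sum_rotorDefect_walkState (r := r) hlap (aggState r k).2.1
      fun s hs => hA k k.lt_succ_self (walkState_mem_of_lt_exitSteps hs)
    rw [ih fun j hj => hA j (hj.trans k.lt_succ_self), totalSteps] at hwalk
    rw [totalSteps, aggState, hwalk,
      finsum_mem_insert _ (walkState_exitSteps_notMem hr hfin _) hfin]
    push_cast
    ring

theorem abs_totalSteps_sub_le (hr : HasDiscrepancy d D r) {n : ℕ}
    (hA : aggRegion r n = A) :
    |(totalSteps r n : ℝ) - (n * exitFun d A 0 - ∑ᶠ x ∈ (A : Set (Site d)), exitFun d A x)|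
      ≤ (2 * D + 1) * gradNorm (unitVec d) (exitFun d A) := by
  set e := exitFun d A with he
  have hsupp : Function.support e ⊆ A := support_exitFun_subset A
  have hsub : ∀ j < n, (aggState r j).1 ⊆ A := fun j hj =>
    (monotone_aggState r (Nat.le_sub_one_of_lt hj)).trans hA.subset
  have hsettle : ∑ᶠ x ∈ (aggState r n).1, e x = ∑ᶠ x ∈ (A : Set (Site d)), e x := by
    refine finsum_mem_inter_support_eq e _ _ ?_
    rw [Set.inter_eq_right.mpr hsupp, Set.inter_eq_right.mpr (hsupp.trans ?_)]
    exact hA.superset.trans (monotone_aggState r n.pred_le)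
  have hdefect := sum_rotorDefect_aggState hr (fun x hx => laplacian_exitFun hx) hsub
  rw [← he, hsettle] at hdefect
  calc |(totalSteps r n : ℝ) - (n * e 0 - ∑ᶠ x ∈ (A : Set (Site d)), e x)|
      = |∑ x ∈ A, rotorDefect r e x ((aggState r n).2.1 x) + e 0| := by
        rw [hdefect]
        ring_nf
    _ ≤ 2 * D * gradNorm (unitVec d) e + gradNorm (unitVec d) e :=
        (abs_add_le _ _).trans <| add_le_add
          (abs_sum_rotorDefect_le hr (summable_of_support_subset hsupp) A _)
          (abs_exitFun_le_gradNorm A 0)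
    _ = (2 * D + 1) * gradNorm (unitVec d) e := by ring

end RotorRouter

theorem lemma_exit (d : ℕ) (hd : 1 ≤ d) :
    ∃ C : ℝ, ∀ (D : ℝ), 1 ≤ D → ∀ r : Site d → ℕ → Dir d, HasDiscrepancy d D r →
      ∀ n : ℕ, 1 ≤ n →
        |(totalSteps r n : ℝ) - ((n : ℝ) * exitFun d (aggRegion r n) 0
            - ∑ᶠ x ∈ aggRegion r n, exitFun d (aggRegion r n) x)|
          ≤ C * D * (n : ℝ) ^ (1 + 1 / (d : ℝ)) := by
  have : NeZero d := ⟨by lia⟩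
  refine ⟨72 * d ^ 2, fun D hD r hr n hn => ?_⟩
  obtain ⟨A, hA⟩ : ∃ A : Finset (Site d), A = aggRegion r n :=
    (finite_aggState r (n - 1)).exists_finset_coe
  have hcard : A.card = n := by
    rw [← Set.ncard_coe_finset, hA, aggRegion, ncard_aggState hr, Nat.sub_add_cancel hn]
  have hgrad := gradNorm_exitFun_le A
  rw [hcard] at hgrad
  rw [← hA]
  calc _ ≤ (2 * D + 1) * gradNorm (unitVec d) (exitFun d A) := abs_totalSteps_sub_le hr hA.symm
    _ ≤ (3 * D) * (24 * d ^ 2 * (n : ℝ) ^ (1 + 1 / (d : ℝ))) :=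
        mul_le_mul (by linarith) hgrad (gradNorm_nonneg _ _) (by linarith)
    _ = 72 * d ^ 2 * D * (n : ℝ) ^ (1 + 1 / (d : ℝ)) := by ring

end RotorRouterPaper
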